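/- Let m be a natural number, let γ₁, γ₂ ∈ ℝ^m and v₁, v₂ ∈ ℝ^m, and suppose diag(γ₁) v₂ = v₂ and diag(γ₂) v₁ = v₁. Then the second-order composed transformations T(I_m, v₁) * T(diag(γ₁), 0) = T(diag(γ₁), v₁) and T(I_m, v₂) * T(diag(γ₂), 0) = T(diag(γ₂), v₂) commute: T(diag(γ₁), v₁) * T(diag(γ₂), v₂) = T(diag(γ₂), v₂) * T(diag(γ₁), v₁). -/

import Mathlib

/-- The `(m+1)×(m+1)` homogeneous-coordinate block matrix `[[A, b], [0, 1]]`. -/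
def affT (m : ℕ) (A : Matrix (Fin m) (Fin m) ℝ) (b : Fin m → ℝ) :
    Matrix (Fin m ⊕ Fin 1) (Fin m ⊕ Fin 1) ℝ :=
  Matrix.fromBlocks A (Matrix.of fun i (_ : Fin 1) => b i) 0 1

/-- The composition law of affine maps: `x ↦ A (B x + c) + b` has linear part `A * B` and
translation part `A c + b`. -/
theorem affT_mul (m : ℕ) (A B : Matrix (Fin m) (Fin m) ℝ) (b c : Fin m → ℝ) :
    affT m A b * affT m B c = affT m (A * B) (A.mulVec c + b) := by
  unfold affT
  rw [Matrix.fromBlocks_multiply]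
  congr 1
  · simp
  · ext i j
    simp [Matrix.mul_apply, Matrix.mulVec, dotProduct]
  · simp
  · simp

/-- Corollary 3 for translation-scaling composites: under the conditions of
Proposition 1, the composed transformations `T(diag γᵢ, vᵢ)` commute. -/
theorem translation_scaling_composites_commute (m : ℕ)
    (γ₁ γ₂ v₁ v₂ : Fin m → ℝ)
    (h1 : (Matrix.diagonal γ₁).mulVec v₂ = v₂)
    (h2 : (Matrix.diagonal γ₂).mulVec v₁ = v₁) :
    affT m 1 v₁ * affT m (Matrix.diagonal γ₁) 0 = affT m (Matrix.diagonal γ₁) v₁ ∧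
    affT m 1 v₂ * affT m (Matrix.diagonal γ₂) 0 = affT m (Matrix.diagonal γ₂) v₂ ∧
    affT m (Matrix.diagonal γ₁) v₁ * affT m (Matrix.diagonal γ₂) v₂ =
      affT m (Matrix.diagonal γ₂) v₂ * affT m (Matrix.diagonal γ₁) v₁ := by
  refine ⟨?_, ?_, ?_⟩
  · simp [affT_mul]
  · simp [affT_mul]
  -- Both products have translation part `v₁ + v₂`, and diagonal matrices commute.
  · rw [affT_mul, affT_mul, h1, h2, add_comm v₂ v₁, (Matrix.commute_diagonal γ₁ γ₂).eq]
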